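/- Let (R, 𝔪) be a commutative Artinian local ring with residue field k = R/𝔪. For any stability condition σ = (Z, P) on D^b(R) = D^b(mod R), every σ-stable object E of D^b(mod R) is isomorphic to k[n] for some integer n, where k is viewed as an object of D^b(mod R) concentrated in degree 0. -/

import Mathlib

open CategoryTheory Limits Pretriangulated DerivedCategory

universe w v u

section StabilityDefs

variable {D : Type*} [Category D] [HasZeroObject D] [Preadditive D] [HasShift D ℤ]
  [∀ n : ℤ, (CategoryTheory.shiftFunctor D n).Additive] [Pretriangulated D]

/-- An object `E` has a Harder–Narasimhan filtration with respect to the slicing `P`: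
a finite sequence `0 = X₀ → X₁ → ⋯ → Xₙ ≅ E` such that the cone of each
`X_{i-1} → X_i` is a nonzero object of `P(φ_i)`, with `φ₁ > φ₂ > ⋯ > φₙ`. -/
def HasHNFiltration (P : ℝ → Set D) (E : D) : Prop :=
  ∃ (n : ℕ) (X : Fin (n + 1) → D) (f : ∀ i : Fin n, X i.castSucc ⟶ X i.succ)
    (φ : Fin n → ℝ), IsZero (X 0) ∧ Nonempty (X (Fin.last n) ≅ E) ∧ StrictAnti φ ∧
    ∀ i : Fin n, ∃ (A : D) (g : X i.succ ⟶ A) (h : A ⟶ (X i.castSucc)⟦(1 : ℤ)⟧),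
      (Triangle.mk (f i) g h ∈ distTriang D) ∧ ¬ IsZero A ∧ A ∈ P (φ i)

/-- A (Bridgeland) stability condition on the full triangulated subcategory of `D`
determined by the collection of objects `B`. It consists of a central charge `Z`,
additive on distinguished triangles of the subcategory, and of strictly full additive
subcategories `P φ ⊆ B` for `φ ∈ ℝ` satisfying the axioms (s1)–(s4). -/
structure StabilityConditionOn (B : Set D) where
  /-- the central charge -/
  Z : D → ℂ
  /-- the slicing -/
  P : ℝ → Set D
  P_le : ∀ φ : ℝ, P φ ⊆ B
  -- each `P φ` is a strictly full additive subcategory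
  P_iso : ∀ (φ : ℝ) (X Y : D), X ∈ P φ → Nonempty (X ≅ Y) → Y ∈ P φ
  P_zero : ∀ (φ : ℝ) (X : D), IsZero X → X ∈ P φ
  P_biprod : ∀ (φ : ℝ) (X Y : D) (b : BinaryBicone X Y), b.IsBilimit →
    X ∈ P φ → Y ∈ P φ → b.pt ∈ P φ
  -- `Z` is additive on distinguished triangles of the subcategory
  Z_add : ∀ T ∈ distTriang D, T.obj₁ ∈ B → Triangle.obj₂ T ∈ B → T.obj₃ ∈ B →
    Z (Triangle.obj₂ T) = Z T.obj₁ + Z T.obj₃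
  s1 : ∀ (φ : ℝ) (E : D), E ∈ P φ → ¬ IsZero E →
    ∃ m : ℝ, 0 < m ∧ Z E = (m : ℂ) * Complex.exp ((Real.pi : ℂ) * Complex.I * (φ : ℂ))
  s2 : ∀ (φ ψ : ℝ), ψ < φ → ∀ E ∈ P φ, ∀ F ∈ P ψ, ∀ f : E ⟶ F, f = 0
  s3 : ∀ (φ : ℝ) (X : D), X ∈ P (φ + 1) ↔ ∃ Y ∈ P φ, Nonempty (X ≅ Y⟦(1 : ℤ)⟧)
  s4 : ∀ E ∈ B, ¬ IsZero E → HasHNFiltration P E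

variable {B : Set D}

/-- An object is `σ`-semistable of phase `φ` if it is a nonzero object of `P φ`. -/
def StabilityConditionOn.IsSemistable (σ : StabilityConditionOn B) (φ : ℝ) (E : D) : Prop :=
  E ∈ σ.P φ ∧ ¬ IsZero E

/-- An object is `σ`-stable if it is `σ`-semistable of some phase `φ` and is simple in
`P φ`: in any distinguished triangle `A ⟶ E ⟶ C ⟶ A[1]` with `A, C ∈ P φ`, either `A`
or `C` is zero. -/
def StabilityConditionOn.IsStable (σ : StabilityConditionOn B) (φ : ℝ) (E : D) : Prop :=
  σ.IsSemistable φ E ∧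
  ∀ (A C : D) (f : A ⟶ E) (g : E ⟶ C) (h : C ⟶ A⟦(1 : ℤ)⟧),
    (Triangle.mk f g h ∈ distTriang D) → A ∈ σ.P φ → C ∈ σ.P φ → IsZero A ∨ IsZero C

/-- `σ` has the Jordan–Hölder property: every `σ`-semistable object of phase `φ` has a
finite filtration whose successive cones are `σ`-stable of phase `φ`. -/
def StabilityConditionOn.HasJHProperty (σ : StabilityConditionOn B) : Prop :=
  ∀ (φ : ℝ) (E : D), E ∈ σ.P φ → ¬ IsZero E →
    ∃ (n : ℕ) (X : Fin (n + 1) → D) (f : ∀ i : Fin n, X i.castSucc ⟶ X i.succ),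
      IsZero (X 0) ∧ Nonempty (X (Fin.last n) ≅ E) ∧
      ∀ i : Fin n, ∃ (A : D) (g : X i.succ ⟶ A) (h : A ⟶ (X i.castSucc)⟦(1 : ℤ)⟧),
        (Triangle.mk (f i) g h ∈ distTriang D) ∧ σ.IsStable φ A

end StabilityDefs

noncomputable section

variable (A : Type u) [CommRing A] [HasDerivedCategory.{w} (ModuleCat.{u} A)]

/-- The objects of the derived category of `A`-modules belonging to `D^b(mod A)`, i.e.
those with only finitely many nonzero cohomology modules, all of them finitely
generated. -/
def DbCoh : Set (DerivedCategory (ModuleCat.{u} A)) :=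
  {E | (∃ a b : ℤ, ∀ i : ℤ, (i < a ∨ b < i) →
          IsZero ((DerivedCategory.homologyFunctor (ModuleCat.{u} A) i).obj E)) ∧
       (∀ i : ℤ, Module.Finite A
          ((DerivedCategory.homologyFunctor (ModuleCat.{u} A) i).obj E))}

/-- An `A`-module viewed as an object of the derived category, placed in degree `0`. -/
abbrev degZero (M : ModuleCat.{u} A) : DerivedCategory (ModuleCat.{u} A) :=
  (DerivedCategory.singleFunctor (ModuleCat.{u} A) 0).obj M

end

/-!
Over an Artinian local ring every nonzero module maps onto `k` and contains a copy of `k`, so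
there is a nonzero morphism between any two nonzero modules. Composing such a morphism with
truncation maps, one gets a nonzero morphism `X⟦b⟧ ⟶ Y⟦a⟧` when `b` is the top degree of `X` and
`a` the bottom degree of `Y`; hence `φ + b ≤ ψ + a` if `X` and `Y` are semistable of phases `φ`
and `ψ`. Taking `X = Y` shows that a semistable object lives in a single degree, and comparing two
of them shows that phase plus degree is constant.

Now let `Y` be a finite module placed in the degree `b` of a semistable object of phase `φ`, and
let `A` be the last Harder–Narasimhan factor of `Y`, in degree `c`. The other factors have larger
phase, thus live in degrees `< c`, so `A` is the truncation of `Y` to degrees `≥ c`; being nonzero,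
it is all of `Y`. Therefore `Y ∈ P φ`. A stable object is a module `M` placed in some degree `b`; in
`0 ⟶ ker q ⟶ M ⟶ k ⟶ 0` all terms then belong to `P φ`, and stability forces `ker q = 0`.
-/

section TStructure

open Triangulated

variable {D : Type*} [Category D] [HasZeroObject D] [Preadditive D] [HasShift D ℤ]
  [∀ n : ℤ, (shiftFunctor D n).Additive] [Pretriangulated D]

/-- The heart of the t-structure `t` has *nonzero homs* if any two nonzero objects of the heart
are related by a nonzero morphism, as is the case for modules over an Artinian local ring. -/
def HeartHasNonzeroHoms (t : TStructure D) : Prop :=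
  ∀ ⦃X Y : D⦄, t.heart X → t.heart Y → ¬ IsZero X → ¬ IsZero Y → ∃ f : X ⟶ Y, f ≠ 0

variable {t : TStructure D} {X Y : D}

namespace HeartHasNonzeroHoms

variable [IsTriangulated D]

lemma exists_ne_zero (ht : HeartHasNonzeroHoms t) [t.IsLE X 0] [t.IsGE Y 0]
    (hX : ¬ t.IsLE X (-1)) (hY : ¬ t.IsGE Y 1) : ∃ f : X ⟶ Y, f ≠ 0 := by
  have hX' : t.heart ((t.truncGE 0).obj X) := by
    rw [t.mem_heart_iff]; constructor <;> infer_instance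
  have hY' : t.heart ((t.truncLE 0).obj Y) := by
    rw [t.mem_heart_iff]; constructor <;> infer_instance
  obtain ⟨f, hf⟩ := ht hX' hY' (by rwa [← t.isLE_iff_isZero_truncGE_obj (-1) 0 rfl])
    (by rwa [← t.isGE_iff_isZero_truncLE_obj 0 1 rfl])
  have : t.IsLE ((t.truncGE 0).obj X) 0 := inferInstance
  refine ⟨(t.truncGEπ 0).app X ≫ f ≫ (t.truncLEι 0).app Y, fun h ↦ hf ?_⟩
  apply t.to_truncLE_obj_ext
  apply t.from_truncGE_obj_ext (Y := Y)
  simpa using h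

lemma exists_shift_ne_zero (ht : HeartHasNonzeroHoms t) (b a : ℤ) [t.IsLE X b] [t.IsGE Y a]
    (hX : ¬ t.IsLE X (b - 1)) (hY : ¬ t.IsGE Y (a + 1)) : ∃ f : X⟦b⟧ ⟶ Y⟦a⟧, f ≠ 0 := by
  have := t.isLE_shift X b b 0
  have := t.isGE_shift Y a a 0
  apply ht.exists_ne_zero
  · rwa [t.isLE_shift_iff X (b - 1) b (-1)]
  · rwa [t.isGE_shift_iff Y (a + 1) a 1]

end HeartHasNonzeroHoms

lemma exists_isLE_not_isLE (hX : t.bounded X) (h0 : ¬ IsZero X) :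
    ∃ b : ℤ, t.IsLE X b ∧ ¬ t.IsLE X (b - 1) := by
  obtain ⟨⟨a, _⟩, hb⟩ := hX
  obtain ⟨b, hb, hmin⟩ := Int.exists_least_of_bdd (P := fun n ↦ t.IsLE X n)
    ⟨a, fun n _ ↦ by by_contra!; exact h0 (t.isZero X n a)⟩ hb
  exact ⟨b, hb, fun h ↦ by have := hmin _ h; lia⟩

lemma exists_isGE_not_isGE (hX : t.bounded X) (h0 : ¬ IsZero X) :
    ∃ a : ℤ, t.IsGE X a ∧ ¬ t.IsGE X (a + 1) := by
  obtain ⟨ha, b, _⟩ := hX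
  obtain ⟨a, ha, hmax⟩ := Int.exists_greatest_of_bdd (P := fun n ↦ t.IsGE X n)
    ⟨b, fun n _ ↦ by by_contra!; exact h0 (t.isZero X b n)⟩ ha
  exact ⟨a, ha, fun h ↦ by have := hmax _ h; lia⟩

lemma not_isLE_of_isGE (h0 : ¬ IsZero X) (b a : ℤ) [t.IsGE X a] (h : b < a := by lia) :
    ¬ t.IsLE X b :=
  fun _ ↦ h0 (t.isZero X b a)

lemma not_isGE_of_isLE (h0 : ¬ IsZero X) (b a : ℤ) [t.IsLE X b] (h : b < a := by lia) :
    ¬ t.IsGE X a :=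
  fun _ ↦ h0 (t.isZero X b a)

lemma isZero_obj₁_of_isLE_of_isGE {T : Triangle D} (hT : T ∈ distTriang D) (b c : ℤ)
    [t.IsLE T.obj₁ (c - 1)] [t.IsLE T.obj₂ b] [t.IsGE T.obj₂ b] [t.IsGE T.obj₃ c]
    (h0 : ¬ IsZero T.obj₃) : IsZero T.obj₁ := by
  have hcb : c ≤ b := by
    by_contra! hbc
    have hT₂ : t.IsLE T.obj₂ (c - 1) := t.isLE_of_le T.obj₂ b (c - 1)
    have hT₁ : t.IsLE (T.obj₁⟦(1 : ℤ)⟧) (c - 1) :=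
      have := t.isLE_shift T.obj₁ (c - 1) 1 (c - 2)
      t.isLE_of_le _ (c - 2) (c - 1)
    have hT₃ : t.IsLE T.obj₃ (c - 1) := t.isLE₂ _ (rot_of_distTriang _ hT) (c - 1) hT₂ hT₁
    exact h0 (t.isZero T.obj₃ (c - 1) c)
  have hT₂ : t.IsGE T.obj₂ c := t.isGE_of_ge T.obj₂ c b
  have hT₃ : t.IsGE (T.obj₃⟦(-1 : ℤ)⟧) c :=
    have := t.isGE_shift T.obj₃ c (-1) (c + 1)
    t.isGE_of_ge _ c (c + 1)
  have hT₁ : t.IsGE T.obj₁ c := t.isGE₂ _ (inv_rot_of_distTriang _ hT) c hT₃ hT₂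
  exact t.isZero T.obj₁ (c - 1) c

lemma mk_comp_iso_mem_distTriang {Z Y' : D} {f : X ⟶ Y} {g : Y ⟶ Z} {h : Z ⟶ X⟦(1 : ℤ)⟧}
    (hT : Triangle.mk f g h ∈ distTriang D) (e : Y ≅ Y') :
    Triangle.mk (f ≫ e.hom) (e.inv ≫ g) h ∈ distTriang D := by
  refine isomorphic_distinguished _ hT _
    (Triangle.isoMk _ _ (Iso.refl X) e.symm (Iso.refl Z) ?_ ?_ ?_) <;> simp [Triangle.mk]

-- Here `T.obj₃` is the last Harder–Narasimhan factor of `E`; the last clause says that `T.obj₁` is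
-- an iterated extension of the other factors, whose phases exceed `ψ`.
lemma HasHNFiltration.exists_distTriang {P : ℝ → Set D} {E : D} (hE : HasHNFiltration P E)
    (h0 : ¬ IsZero E) :
    ∃ (ψ : ℝ) (T : Triangle D), T ∈ distTriang D ∧ T.obj₂ = E ∧ T.obj₃ ∈ P ψ ∧ ¬ IsZero T.obj₃ ∧
      ∀ d : ℤ, (∀ χ > ψ, ∀ F ∈ P χ, ¬ IsZero F → t.IsLE F d) → t.IsLE T.obj₁ d := by
  obtain ⟨n, X, f, φ, hX, ⟨e⟩, hφ, hf⟩ := hE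
  match n with
  | 0 => exact absurd (hX.of_iso e.symm) h0
  | n + 1 =>
    obtain ⟨A, g, h, hT, hA, hAφ⟩ := hf (Fin.last n)
    refine ⟨φ (Fin.last n), Triangle.mk (f (Fin.last n) ≫ e.hom) (e.inv ≫ g) h, ?_, rfl, hAφ, hA,
      fun d hd ↦ ?_⟩
    · exact mk_comp_iso_mem_distTriang hT e
    · suffices ∀ i : Fin (n + 1), t.IsLE (X i.castSucc) d from this (Fin.last n)
      intro i
      induction i using Fin.induction with
      | zero => exact t.isLE_of_isZero hX d
      | succ i hi =>
        obtain ⟨F, g, h, hT, hF, hFφ⟩ := hf i.castSucc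
        exact t.isLE₂ _ hT d hi (hd _ (hφ i.castSucc_lt_last) F hFφ hF)

namespace StabilityConditionOn

variable {B : Set D} (σ : StabilityConditionOn B)

lemma shift_mem_P {φ : ℝ} (hX : X ∈ σ.P φ) (n : ℤ) : X⟦n⟧ ∈ σ.P (φ + n) := by
  induction n using Int.induction_on with
  | zero => simpa using σ.P_iso φ X _ hX ⟨((shiftFunctorZero D ℤ).app X).symm⟩
  | succ n ih =>
    have h := (σ.s3 _ _).2 ⟨_, ih, ⟨(shiftFunctorAdd D (n : ℤ) 1).app X⟩⟩
    convert h using 2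
    push_cast; ring
  | pred n ih =>
    have h : φ + ((-n : ℤ) : ℝ) = φ + ((-n - 1 : ℤ) : ℝ) + 1 := by push_cast; ring
    rw [h] at ih
    obtain ⟨Y, hY, ⟨e⟩⟩ := (σ.s3 _ _).1 ih
    refine σ.P_iso _ Y _ hY ⟨(shiftFunctor D (1 : ℤ)).preimageIso (e.symm ≪≫ ?_)⟩
    exact (shiftFunctorAdd' D (-n - 1 : ℤ) 1 (-n) (by lia)).app X

variable {σ} {φ ψ : ℝ} [IsTriangulated D] (ht : HeartHasNonzeroHoms t)
include ht

lemma phase_add_le (hX : X ∈ σ.P φ) (hY : Y ∈ σ.P ψ) {b a : ℤ} [t.IsLE X b] [t.IsGE Y a]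
    (hXb : ¬ t.IsLE X (b - 1)) (hYa : ¬ t.IsGE Y (a + 1)) : φ + b ≤ ψ + a := by
  obtain ⟨f, hf⟩ := ht.exists_shift_ne_zero b a hXb hYa
  by_contra! h
  exact hf (σ.s2 _ _ h _ (σ.shift_mem_P hX b) _ (σ.shift_mem_P hY a) f)

lemma IsSemistable.exists_isLE_isGE (hB : B ⊆ t.bounded) (hX : σ.IsSemistable φ X) :
    ∃ b : ℤ, t.IsLE X b ∧ t.IsGE X b := by
  have hbdd := hB (σ.P_le φ hX.1)
  obtain ⟨b, _, hb⟩ := exists_isLE_not_isLE hbdd hX.2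
  obtain ⟨a, _, ha⟩ := exists_isGE_not_isGE hbdd hX.2
  have hba : (b : ℝ) ≤ a := by linarith [phase_add_le ht hX.1 hX.1 hb ha]
  exact ⟨b, inferInstance, t.isGE_of_ge X b a (by exact_mod_cast hba)⟩

lemma IsSemistable.phase_add_eq (hX : σ.IsSemistable φ X) (hY : σ.IsSemistable ψ Y) (b c : ℤ)
    [t.IsLE X b] [t.IsGE X b] [t.IsLE Y c] [t.IsGE Y c] : φ + b = ψ + c :=
  le_antisymm
    (phase_add_le ht hX.1 hY.1 (not_isLE_of_isGE hX.2 _ b) (not_isGE_of_isLE hY.2 c _))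
    (phase_add_le ht hY.1 hX.1 (not_isLE_of_isGE hY.2 _ c) (not_isGE_of_isLE hX.2 b _))

lemma IsSemistable.mem_P (hB : B ⊆ t.bounded) (hX : σ.IsSemistable φ X) (hY : Y ∈ B) (b : ℤ)
    [t.IsLE X b] [t.IsGE X b] [t.IsLE Y b] [t.IsGE Y b] : Y ∈ σ.P φ := by
  by_cases h0 : IsZero Y
  · exact σ.P_zero φ Y h0
  obtain ⟨ψ, T, hT, rfl, hA, hA0, hT₁⟩ := (σ.s4 Y hY h0).exists_distTriang (t := t) h0
  have hA : σ.IsSemistable ψ T.obj₃ := ⟨hA, hA0⟩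
  obtain ⟨c, _, _⟩ := hA.exists_isLE_isGE ht hB
  have hT₁ : t.IsLE T.obj₁ (c - 1) := hT₁ _ fun χ hχ F hF hF0 ↦ by
    have hF : σ.IsSemistable χ F := ⟨hF, hF0⟩
    obtain ⟨d, _, _⟩ := hF.exists_isLE_isGE ht hB
    have hdc : (d : ℝ) < c := by linarith [hF.phase_add_eq ht hA d c]
    norm_cast at hdc
    exact t.isLE_of_le F d (c - 1)
  have hT₀ : IsZero T.obj₁ := isZero_obj₁_of_isLE_of_isGE (t := t) hT b c hA.2
  have : IsIso T.mor₂ := (Triangle.isZero₁_iff_isIso₂ _ hT).1 hT₀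
  have hYψ : T.obj₂ ∈ σ.P ψ := σ.P_iso ψ _ _ hA.1 ⟨(asIso T.mor₂).symm⟩
  have : φ = ψ := by linarith [hX.phase_add_eq ht ⟨hYψ, h0⟩ b b]
  rwa [this]

end StabilityConditionOn

end TStructure

section DerivedCategory

open Triangulated

variable {C : Type u} [Category.{v} C] [Abelian C] [HasDerivedCategory.{w} C]

lemma isZero_singleFunctor_obj_iff (M : C) (b : ℤ) :
    IsZero ((singleFunctor C b).obj M) ↔ IsZero M :=
  ⟨fun h ↦ ((homologyFunctor C b).map_isZero h).of_iso
    ((singleFunctorCompHomologyFunctorIso C b).app M).symm, (singleFunctor C b).map_isZero⟩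

lemma heartHasNonzeroHoms_t
    (hC : ∀ X Y : C, ¬ IsZero X → ¬ IsZero Y → ∃ f : X ⟶ Y, f ≠ 0) :
    HeartHasNonzeroHoms (TStructure.t (C := C)) := by
  intro X Y hX hY hX0 hY0
  obtain ⟨_, _⟩ := (TStructure.t.mem_heart_iff X).1 hX
  obtain ⟨_, _⟩ := (TStructure.t.mem_heart_iff Y).1 hY
  obtain ⟨M, ⟨eX⟩⟩ := exists_iso_singleFunctor_obj_of_isGE_of_isLE X 0
  obtain ⟨N, ⟨eY⟩⟩ := exists_iso_singleFunctor_obj_of_isGE_of_isLE Y 0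
  obtain ⟨f, hf⟩ := hC M N (by rwa [← isZero_singleFunctor_obj_iff M 0, ← eX.isZero_iff])
    (by rwa [← isZero_singleFunctor_obj_iff N 0, ← eY.isZero_iff])
  refine ⟨eX.hom ≫ (singleFunctor C 0).map f ≫ eY.inv, fun h ↦ hf ?_⟩
  apply (singleFunctor C 0).map_injective
  simpa [Preadditive.IsIso.comp_left_eq_zero, Preadditive.IsIso.comp_right_eq_zero] using h

lemma exists_distTriang_singleFunctor_obj {S : ShortComplex C} (hS : S.ShortExact) {b : ℤ}
    {E : DerivedCategory C} (e : (singleFunctor C b).obj S.X₂ ≅ E) :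
    ∃ (f : (singleFunctor C b).obj S.X₁ ⟶ E) (g : E ⟶ (singleFunctor C b).obj S.X₃)
      (h : (singleFunctor C b).obj S.X₃ ⟶ ((singleFunctor C b).obj S.X₁)⟦(1 : ℤ)⟧),
      Triangle.mk f g h ∈ distTriang (DerivedCategory C) :=
  ⟨_, _, _, mk_comp_iso_mem_distTriang (triangleOfSES_distinguished
    (hS.map_of_exact (HomologicalComplex.single C (ComplexShape.up ℤ) b))) e⟩

variable {B : Set (DerivedCategory C)} {σ : StabilityConditionOn B}

lemma StabilityConditionOn.IsStable.isZero_or_isZero_of_shortExact {E : DerivedCategory C} {φ : ℝ}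
    (hE : σ.IsStable φ E) (ht : HeartHasNonzeroHoms (TStructure.t (C := C)))
    (hB : B ⊆ (TStructure.t (C := C)).bounded) {S : ShortComplex C} (hS : S.ShortExact) {b : ℤ}
    (e : (singleFunctor C b).obj S.X₂ ≅ E) (h₁ : (singleFunctor C b).obj S.X₁ ∈ B)
    (h₃ : (singleFunctor C b).obj S.X₃ ∈ B) : IsZero S.X₁ ∨ IsZero S.X₃ := by
  have : E.IsLE b := TStructure.t.isLE_of_iso e b
  have : E.IsGE b := TStructure.t.isGE_of_iso e b
  obtain ⟨f, g, h, hT⟩ := exists_distTriang_singleFunctor_obj hS e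
  simpa only [isZero_singleFunctor_obj_iff] using
    hE.2 _ _ f g h hT (hE.1.mem_P ht hB h₁ b) (hE.1.mem_P ht hB h₃ b)

end DerivedCategory

section LocalRing

lemma exists_isCoatom_submodule (R : Type*) [Ring R] [IsSemiprimaryRing R] (M : Type*)
    [AddCommGroup M] [Module R M] [Nontrivial M] : ∃ N : Submodule R M, IsCoatom N := by
  suffices Nontrivial M → ∃ N : Submodule R M, IsCoatom N from this ‹_›
  refine IsSemiprimaryRing.induction (R₀ := ℤ) (R := R) (M := M)
    (P := fun M _ _ _ ↦ Nontrivial M → ∃ N : Submodule R M, IsCoatom N) ?_ ?_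
  · intro M _ _ _ _ _ _ _
    exact IsCoatomic.exists_coatom _
  · intro M _ _ _ _ N ihN ihQ _
    obtain hN | hN := subsingleton_or_nontrivial (M ⧸ N)
    · let e := (LinearEquiv.ofTop N (Submodule.Quotient.subsingleton_iff.1 hN)).symm
      obtain ⟨K, hK⟩ := ihN e.symm.nontrivial
      exact ⟨K.comap e.toLinearMap, (Submodule.isCoatom_comap_iff e.surjective).2 hK⟩
    · obtain ⟨K, hK⟩ := ihQ hN
      exact ⟨K.comap N.mkQ, (Submodule.isCoatom_comap_iff N.mkQ_surjective).2 hK⟩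

open IsLocalRing

variable {R : Type*} [CommRing R] [IsLocalRing R] (M : Type*) [AddCommGroup M] [Module R M]
  [Nontrivial M]

lemma exists_surjective_quotient_maximalIdeal [IsSemiprimaryRing R] :
    ∃ f : M →ₗ[R] R ⧸ maximalIdeal R, Function.Surjective f := by
  obtain ⟨N, hN⟩ := exists_isCoatom_submodule R M
  obtain ⟨I, hI, ⟨e⟩⟩ := isSimpleModule_iff_quot_maximal.1 (isSimpleModule_iff_isCoatom.2 hN)
  obtain rfl := eq_maximalIdeal hI
  exact ⟨e.toLinearMap ∘ₗ N.mkQ, e.surjective.comp N.mkQ_surjective⟩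

lemma exists_injective_quotient_maximalIdeal [IsArtinianRing R] :
    ∃ f : R ⧸ maximalIdeal R →ₗ[R] M, Function.Injective f := by
  obtain ⟨x, hx⟩ := exists_ne (0 : M)
  have : Nontrivial (R ∙ x) := Submodule.nontrivial_span_singleton hx
  obtain ⟨N, hN⟩ := IsAtomic.exists_atom (Submodule R (R ∙ x))
  obtain ⟨I, hI, ⟨e⟩⟩ := isSimpleModule_iff_quot_maximal.1 (isSimpleModule_iff_isAtom.2 hN)
  obtain rfl := eq_maximalIdeal hI
  exact ⟨(R ∙ x).subtype ∘ₗ N.subtype ∘ₗ e.symm.toLinearMap, (R ∙ x).subtype_injective.comp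
    (N.subtype_injective.comp e.symm.injective)⟩

lemma exists_linearMap_ne_zero [IsArtinianRing R] (N : Type*) [AddCommGroup N] [Module R N]
    [Nontrivial N] : ∃ f : M →ₗ[R] N, f ≠ 0 := by
  obtain ⟨p, hp⟩ := exists_surjective_quotient_maximalIdeal (R := R) M
  obtain ⟨i, hi⟩ := exists_injective_quotient_maximalIdeal (R := R) N
  obtain ⟨x, hx⟩ := hp 1
  refine ⟨i ∘ₗ p, fun h ↦ one_ne_zero (hi ?_)⟩
  simpa [hx] using LinearMap.congr_fun h x

end LocalRing

section DbCoh

variable {R : Type u} [CommRing R] [HasDerivedCategory.{w} (ModuleCat.{u} R)]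

lemma DbCoh_subset_bounded : DbCoh R ⊆ (TStructure.t (C := ModuleCat.{u} R)).bounded :=
  fun E ⟨⟨a, b, h⟩, _⟩ ↦ ⟨⟨a, (isGE_iff E a).2 fun i hi ↦ h i (.inl hi)⟩,
    b, (isLE_iff E b).2 fun i hi ↦ h i (.inr hi)⟩

lemma singleFunctor_obj_mem_DbCoh (b : ℤ) (M : ModuleCat.{u} R) [Module.Finite R M] :
    (singleFunctor (ModuleCat.{u} R) b).obj M ∈ DbCoh R := by
  have h0 (i : ℤ) (hi : i ≠ b) : IsZero ((homologyFunctor _ i).obj ((singleFunctor _ b).obj M)) :=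
    hi.lt_or_gt.elim (isZero_of_isGE _ b i ·) (isZero_of_isLE _ b i ·)
  refine ⟨⟨b, b, fun i hi ↦ h0 i (by lia)⟩, fun i ↦ ?_⟩
  by_cases hi : i = b
  · subst hi
    have e : M ≅ (homologyFunctor _ i).obj ((singleFunctor _ i).obj M) :=
      ((singleFunctorCompHomologyFunctorIso (ModuleCat.{u} R) i).app M).symm
    exact Module.Finite.equiv e.toLinearEquiv
  · have := ModuleCat.subsingleton_of_isZero (h0 i hi)
    infer_instance

lemma finite_of_iso_singleFunctor_obj {E : DerivedCategory (ModuleCat.{u} R)} (hE : E ∈ DbCoh R)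
    {b : ℤ} {M : ModuleCat.{u} R} (e : (singleFunctor (ModuleCat.{u} R) b).obj M ≅ E) :
    Module.Finite R M := by
  have := hE.2 b
  exact Module.Finite.equiv (((homologyFunctor (ModuleCat.{u} R) b).mapIso e).symm ≪≫
    (singleFunctorCompHomologyFunctorIso (ModuleCat.{u} R) b).app M).toLinearEquiv

lemma heartHasNonzeroHoms_moduleCat [IsArtinianRing R] [IsLocalRing R] :
    HeartHasNonzeroHoms (TStructure.t (C := ModuleCat.{u} R)) := by
  refine heartHasNonzeroHoms_t fun M N hM hN ↦ ?_
  rw [ModuleCat.isZero_iff_subsingleton, not_subsingleton_iff_nontrivial] at hM hN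
  obtain ⟨f, hf⟩ := exists_linearMap_ne_zero (R := R) M N
  exact ⟨ModuleCat.ofHom f, fun h ↦ hf (by simpa using congrArg ModuleCat.Hom.hom h)⟩

lemma StabilityConditionOn.IsStable.nonempty_linearEquiv_quotient_maximalIdeal [IsArtinianRing R]
    [IsLocalRing R] {σ : StabilityConditionOn (DbCoh R)} {φ : ℝ}
    {E : DerivedCategory (ModuleCat.{u} R)} (hE : σ.IsStable φ E) {b : ℤ} {M : ModuleCat.{u} R}
    (e : (singleFunctor (ModuleCat.{u} R) b).obj M ≅ E) :
    Nonempty (M ≃ₗ[R] R ⧸ IsLocalRing.maximalIdeal R) := by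
  have : Module.Finite R M := finite_of_iso_singleFunctor_obj (σ.P_le φ hE.1.1) e
  have : Nontrivial M := by
    rw [← not_subsingleton_iff_nontrivial, ← ModuleCat.isZero_iff_subsingleton,
      ← isZero_singleFunctor_obj_iff M b, e.isZero_iff]
    exact hE.1.2
  obtain ⟨q, hq⟩ := exists_surjective_quotient_maximalIdeal (R := R) M
  obtain hker | hk := hE.isZero_or_isZero_of_shortExact heartHasNonzeroHoms_moduleCat
    DbCoh_subset_bounded (LinearMap.shortExact_shortComplexKer hq) e
    (singleFunctor_obj_mem_DbCoh b (ModuleCat.of R (LinearMap.ker q)))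
    (singleFunctor_obj_mem_DbCoh b (ModuleCat.of R (R ⧸ IsLocalRing.maximalIdeal R)))
  · rw [ModuleCat.isZero_of_iff_subsingleton, Submodule.subsingleton_iff_eq_bot,
      LinearMap.ker_eq_bot] at hker
    exact ⟨LinearEquiv.ofBijective q ⟨hker, hq⟩⟩
  · rw [ModuleCat.isZero_of_iff_subsingleton] at hk
    exact absurd hk (not_subsingleton _)

end DbCoh

/-- For any stability condition `σ` on `D^b(mod R)`, `R` an Artinian local commutative
ring, every `σ`-stable object is isomorphic to a shift `k[n]` of the residue field
`k = R/𝔪` placed in degree `0`. -/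
theorem stmt9 (R : Type u) [CommRing R] [IsArtinianRing R] [IsLocalRing R]
    [HasDerivedCategory.{w} (ModuleCat.{u} R)]
    (σ : StabilityConditionOn (DbCoh R))
    (E : DerivedCategory (ModuleCat.{u} R)) (φ : ℝ) (hE : σ.IsStable φ E) :
    ∃ n : ℤ, Nonempty
      (E ≅ (degZero R (ModuleCat.of R (R ⧸ IsLocalRing.maximalIdeal R)))⟦n⟧) := by
  obtain ⟨b, _, _⟩ := hE.1.exists_isLE_isGE heartHasNonzeroHoms_moduleCat DbCoh_subset_bounded
  obtain ⟨M, ⟨e⟩⟩ := exists_iso_singleFunctor_obj_of_isGE_of_isLE E b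
  obtain ⟨eM⟩ := hE.nonempty_linearEquiv_quotient_maximalIdeal e.symm
  exact ⟨-b, ⟨e ≪≫ (singleFunctor (ModuleCat.{u} R) b).mapIso eM.toModuleIso ≪≫
    (((singleFunctors (ModuleCat.{u} R)).shiftIso (-b) b 0 (by lia)).app _).symm⟩⟩
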